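/- Let A be a skew-symmetric n×n real matrix and T ⊆ I. Define p : 2^I → {−1,0,+1} by p(S) = sign Pf(A_{S Δ T}). Then p is an oriented even Δ-matroid, and its collection of bases {S : p(S) ≠ 0} = {S : Pf(A_{S Δ T}) ≠ 0} is the Δ-matroid represented by A and T in Bouchet's sense. -/

import Mathlib

/-- The Pfaffian of an `N × N` matrix (intended for skew-symmetric matrices):
`Pf(A) = ∑_{σ ∈ S'_N} sign(σ) ∏_{k=1}^{N/2} a_{σ(2k-1) σ(2k)}`, where `S'_N` is the
set of permutations `σ` of `{0, …, N-1}` such that `σ(2k)` is minimal among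
`σ(2k), σ(2k+1), …, σ(N-1)` for each `k`.  It is `0` for odd `N` and `1` for `N = 0`. -/
noncomputable def pfaffian {N : ℕ} (A : Matrix (Fin N) (Fin N) ℝ) : ℝ :=
  if h : 2 ∣ N then
    ∑ σ ∈ Finset.univ.filter
        (fun σ : Equiv.Perm (Fin N) =>
          ∀ p q : Fin N, 2 ∣ (p : ℕ) → p ≤ q → σ p ≤ σ q),
      ((Equiv.Perm.sign σ : ℤ) : ℝ) *
        ∏ k : Fin (N / 2),
          A (σ ⟨2 * (k : ℕ), by have := k.2; omega⟩)
            (σ ⟨2 * (k : ℕ) + 1, by have := k.2; omega⟩)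
  else 0

/-- The Pfaffian of the principal minor of `A` indexed by the subset `S`,
with rows and columns of the minor taken in increasing order of index. -/
noncomputable def pfMinor {n : ℕ} (A : Matrix (Fin n) (Fin n) ℝ) (S : Finset (Fin n)) : ℝ :=
  pfaffian (Matrix.of fun p q : Fin S.card =>
    A ((S.orderIsoOfFin rfl p : S) : Fin n) ((S.orderIsoOfFin rfl q : S) : Fin n))


/-- An **oriented even Δ-matroid** on `I = {1,…,n}`: a map
`p : 2^I → {+1, −1, 0}` such that (1) `p` is not identically zero; (2) any two sets
with nonzero value have cardinalities of equal parity; (3) whenever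
`A Δ B = {i₁ < … < i_l}` and, for some `w ∈ {+1, −1}`, all the quantities
`κ_j = w (−1)^j p(A Δ {i_j}) p(B Δ {i_j})` are nonnegative, they are all zero. -/
def IsOrientedEvenDeltaMatroid {n : ℕ} (p : Finset (Fin n) → SignType) : Prop :=
  (∃ S, p S ≠ 0) ∧
  (∀ A B : Finset (Fin n), p A ≠ 0 → p B ≠ 0 → A.card % 2 = B.card % 2) ∧
  (∀ A B : Finset (Fin n), ∀ w : SignType, (w = 1 ∨ w = -1) →
    (∀ j : Fin (symmDiff A B).card,
      0 ≤ w * (-1 : SignType) ^ ((j : ℕ) + 1) *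
        p (symmDiff A {((symmDiff A B).orderIsoOfFin rfl j : Fin n)}) *
        p (symmDiff B {((symmDiff A B).orderIsoOfFin rfl j : Fin n)})) →
    (∀ j : Fin (symmDiff A B).card,
      w * (-1 : SignType) ^ ((j : ℕ) + 1) *
        p (symmDiff A {((symmDiff A B).orderIsoOfFin rfl j : Fin n)}) *
        p (symmDiff B {((symmDiff A B).orderIsoOfFin rfl j : Fin n)}) = 0))

/-- The determinant of the principal minor of `A` indexed by the subset `S`, rows
and columns taken in increasing order. -/
noncomputable def detMinor {n : ℕ} (A : Matrix (Fin n) (Fin n) ℝ) (S : Finset (Fin n)) : ℝ :=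
  Matrix.det (Matrix.of fun p q : Fin S.card =>
    A ((S.orderIsoOfFin rfl p : S) : Fin n) ((S.orderIsoOfFin rfl q : S) : Fin n))

/-!
For an alternating form `B`, the exponential of contraction with `B` is an automorphism of the
exterior algebra.  Its scalar part `φ` is determined by `φ 1 = 1` and `φ (v ∧ x) = φ (B v ⌋ x)`, so
on the ordered product `e_S` of basis vectors it satisfies the expansion of the Pfaffian along its
first row: `φ e_S = Pf(A_S)`.  Taking for `v` an arbitrary basis vector `e i` gives the expansion
along every row at once, and its vanishing when `i ∈ S` because `e i ∧ e_S = 0`.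

Multiplying the expansions over `S` by the cofactors of `B` and vice versa, the skew-symmetry of `A`
cancels all terms and leaves the Wick relations
`∑_{i ∈ S Δ B} ± Pf(A_{S Δ i}) Pf(A_{B Δ i}) = 0`, with alternating signs.  They are invariant under
`S ↦ S Δ T`, and the terms of a vanishing real sum that all have the same sign are zero.

The cofactors also form a matrix `C` with `A_S C = Pf(A_S) 1`, so `det A_S ≠ 0` if `Pf(A_S) ≠ 0`.
If `Pf(A_S) = 0`, choose `B ⊆ S` maximal with `Pf(A_B) ≠ 0` and `l ∈ S \ B`: by the same expansions
the cofactors of `B ∪ {l}` form a nonzero vector in the kernel of `A_S`.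
-/

open scoped symmDiff

section SymmDiff

variable {ι : Type*} [DecidableEq ι]

lemma card_symmDiff_add (S B : Finset ι) :
    (S ∆ B).card + 2 * (S ∩ B).card = S.card + B.card := by
  rw [symmDiff, Finset.sup_eq_union, Finset.card_union_of_disjoint disjoint_sdiff_sdiff]
  have hS := Finset.card_sdiff_add_card_inter S B
  have hB := Finset.card_sdiff_add_card_inter B S
  rw [Finset.inter_comm] at hB
  lia

lemma symmDiff_singleton_of_mem {S : Finset ι} {i : ι} (hi : i ∈ S) : S ∆ {i} = S.erase i := by
  grind [Finset.mem_symmDiff]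

lemma symmDiff_singleton_of_notMem {S : Finset ι} {i : ι} (hi : i ∉ S) :
    S ∆ {i} = insert i S := by
  grind [Finset.mem_symmDiff]

end SymmDiff

section Position

variable {ι : Type*} [LinearOrder ι]

/-- The number of elements of `S` below `i`: the zero-based rank of `i` when `i ∈ S`.  Its parity is
the sign that moves `i` into place in the increasing enumeration of `S`. -/
def position (S : Finset ι) (i : ι) : ℕ :=
  (S.filter (· < i)).card

lemma position_eq_zero {S : Finset ι} {i : ι} (h : ∀ k ∈ S, i ≤ k) : position S i = 0 := by
  simpa [position, Finset.filter_eq_empty_iff] using h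

lemma position_insert_of_lt {S : Finset ι} {i m : ι} (hm : m ∉ S) (h : m < i) :
    position (insert m S) i = position S i + 1 := by
  rw [position, Finset.filter_insert, if_pos h,
    Finset.card_insert_of_notMem fun hmem => hm (Finset.mem_of_mem_filter m hmem), position]

lemma position_image {N : ℕ} {f : Fin N → ι} (hf : StrictMono f) (j : Fin N) :
    position (Finset.univ.image f) (f j) = j := by
  simp [position, Finset.filter_image, hf.lt_iff_lt, Finset.filter_gt_eq_Iio,
    Finset.card_image_of_injective _ hf.injective]

lemma position_orderIsoOfFin (S : Finset ι) (j : Fin S.card) :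
    position S (S.orderIsoOfFin rfl j) = j := by
  simpa using position_image (S.orderEmbOfFin rfl).strictMono j

lemma neg_one_pow_position_symmDiff (R : Type*) [Ring R] (S B : Finset ι) (i : ι) :
    (-1 : R) ^ position (S ∆ B) i = (-1) ^ position S i * (-1) ^ position B i := by
  have hfilter : (S ∆ B).filter (· < i) = S.filter (· < i) ∆ B.filter (· < i) := by
    ext k
    simp only [Finset.mem_filter, Finset.mem_symmDiff]
    tauto
  rw [← pow_add, position, position, position, ← card_symmDiff_add, hfilter, pow_add _ (_ : ℕ),
    (even_two_mul _).neg_one_pow, mul_one]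

end Position

section Blade

variable {ι R V : Type*} [LinearOrder ι] [CommRing R] [AddCommGroup V] [Module R V]

variable (R) in
/-- The exterior product of the vectors `e i`, `i ∈ S`, in increasing order of index. -/
def blade (e : ι → V) (S : Finset ι) : ExteriorAlgebra R V :=
  (S.sort.map fun i => ExteriorAlgebra.ι R (e i)).prod

@[simp]
lemma blade_empty (e : ι → V) : blade R e ∅ = 1 := by
  simp [blade]

lemma blade_insert_of_lt (e : ι → V) {m : ι} {S : Finset ι} (hm : ∀ k ∈ S, m < k) :
    blade R e (insert m S) = ExteriorAlgebra.ι R (e m) * blade R e S := by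
  rw [blade, Finset.sort_insert _ (fun k hk => (hm k hk).le) fun h => (hm m h).false, List.map_cons,
    List.prod_cons, blade]

lemma ι_mul_blade (e : ι → V) (i : ι) (S : Finset ι) :
    ExteriorAlgebra.ι R (e i) * blade R e S =
      if i ∈ S then 0 else (-1 : R) ^ position S i • blade R e (insert i S) := by
  induction S using Finset.induction_on_min with
  | empty => simpa [position] using (blade_insert_of_lt e (m := i) (S := ∅) (by simp)).symm
  | insert m S hm ih =>
    have hmS : m ∉ S := fun h => (hm m h).false
    rcases lt_trichotomy i m with him | rfl | hmi
    · have hlt : ∀ k ∈ insert m S, i < k := by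
        simpa [him] using fun k hk => him.trans (hm k hk)
      rw [if_neg fun h => (hlt i h).false, position_eq_zero fun k hk => (hlt k hk).le,
        blade_insert_of_lt e hlt, pow_zero, one_smul]
    · rw [if_pos (Finset.mem_insert_self i S), blade_insert_of_lt e hm, ← mul_assoc,
        ExteriorAlgebra.ι_sq_zero, zero_mul]
    · have hswap : ExteriorAlgebra.ι R (e i) * blade R e (insert m S) =
          -(ExteriorAlgebra.ι R (e m) * (ExteriorAlgebra.ι R (e i) * blade R e S)) := by
        rw [blade_insert_of_lt e hm, ← mul_assoc, ← mul_assoc, ← neg_mul,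
          eq_neg_of_add_eq_zero_left (ExteriorAlgebra.ι_add_mul_swap (e i) (e m))]
      rw [hswap, ih]
      by_cases hiS : i ∈ S
      · simp [hiS]
      · have hm' : ∀ k ∈ insert i S, m < k := by simpa [hmi] using hm
        rw [if_neg hiS, if_neg (by simp [hmi.ne', hiS]), position_insert_of_lt hmS hmi,
          Finset.insert_comm, blade_insert_of_lt e hm', mul_smul_comm, pow_succ, mul_neg_one,
          neg_smul]

lemma contractLeft_blade (d : Module.Dual R V) (e : ι → V) (S : Finset ι) :
    CliffordAlgebra.contractLeft d (blade R e S) =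
      ∑ j ∈ S, ((-1) ^ position S j * d (e j)) • blade R e (S.erase j) := by
  induction S using Finset.induction_on_min with
  | empty => simp
  | insert m S hm ih =>
    have hmS : m ∉ S := fun h => (hm m h).false
    have hmin : ∀ k ∈ insert m S, m ≤ k := by
      simpa using fun k hk => (hm k hk).le
    rw [blade_insert_of_lt e hm, ExteriorAlgebra.ι, CliffordAlgebra.contractLeft_ι_mul, ih,
      Finset.sum_insert hmS, Finset.erase_insert hmS, position_eq_zero hmin, pow_zero, one_mul,
      sub_eq_add_neg, Finset.mul_sum, ← Finset.sum_neg_distrib]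
    congr 1
    refine Finset.sum_congr rfl fun j hj => ?_
    rw [Finset.erase_insert_of_ne (hm j hj).ne,
      blade_insert_of_lt e fun k hk => hm k (Finset.mem_of_mem_erase hk),
      position_insert_of_lt hmS (hm j hj), mul_smul_comm, ← neg_smul, pow_succ, mul_neg_one,
      neg_mul, ExteriorAlgebra.ι]

end Blade

section WickFunctional

variable {R V : Type*} [CommRing R] [AddCommGroup V] [Module R V] {B : LinearMap.BilinForm R V}

/-- The Wick functional of an alternating form `B`: the scalar part of the automorphism
`CliffordAlgebra.changeForm` of the exterior algebra, which is the exponential of contraction with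
`B`.  Its values on products of vectors are the Pfaffians of `B`. -/
def wickFunctional (hB : B.IsAlt) : ExteriorAlgebra R V →ₗ[R] R :=
  ExteriorAlgebra.algebraMapInv.toLinearMap ∘ₗ
    CliffordAlgebra.changeForm (B := -B) (Q := 0) (Q' := 0) (by ext v; simp [hB v])

lemma wickFunctional_one (hB : B.IsAlt) : wickFunctional hB 1 = 1 := by
  simp [wickFunctional]

lemma wickFunctional_ι_mul (hB : B.IsAlt) (v : V) (x : ExteriorAlgebra R V) :
    wickFunctional hB (ExteriorAlgebra.ι R v * x) =
      wickFunctional hB (CliffordAlgebra.contractLeft (B v) x) := by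
  simp [wickFunctional, ExteriorAlgebra.ι, ExteriorAlgebra.algebraMapInv, ExteriorAlgebra.lift,
    CliffordAlgebra.changeForm_ι_mul, CliffordAlgebra.changeForm_contractLeft]

end WickFunctional

section AlternatingMatrix

variable {ι R : Type*} [CommRing R] {A : Matrix ι ι R}

/-- Alternating matrices: skew-symmetric with zero diagonal, the form of skew-symmetry that is
meaningful over every commutative ring. -/
structure IsAlternating (A : Matrix ι ι R) : Prop where
  diag (i : ι) : A i i = 0
  skew (i j : ι) : A i j = -A j i

lemma isAlternating_of_transpose_eq_neg [IsAddTorsionFree R] (hA : A.transpose = -A) :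
    IsAlternating A := by
  have hskew (i j : ι) : A i j = -A j i := congrFun₂ hA j i
  exact ⟨fun i => self_eq_neg.mp (hskew i i), hskew⟩

lemma IsAlternating.isAlt_linearCombination (hA : IsAlternating A) :
    LinearMap.IsAlt (Finsupp.linearCombination R fun i => Finsupp.linearCombination R (A i)) := by
  set B : LinearMap.BilinForm R (ι →₀ R) :=
    Finsupp.linearCombination R fun i => Finsupp.linearCombination R (A i) with hB
  have hflip : B = -B.flip := by
    ext i j
    simpa [hB] using hA.skew i j
  intro v
  induction v using Finsupp.induction_linear with
  | zero => simp
  | add v w hv hw =>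
    have hvw : B v w = -B w v := LinearMap.congr_fun₂ hflip v w
    simp [hv, hw, hvw]
  | single i c => simp [hB, hA.diag]

end AlternatingMatrix

section PfaffianFamily

variable {ι R : Type*} [LinearOrder ι] [CommRing R] {A : Matrix ι ι R} {P Q : Finset ι → R}

/-- `P S` obeys the recursion of the Pfaffians of the principal submatrices `A_S`, expanded along
their first rows. -/
structure IsPfaffianFamily (A : Matrix ι ι R) (P : Finset ι → R) : Prop where
  empty : P ∅ = 1
  insert_of_lt {m : ι} {S : Finset ι} (hm : ∀ k ∈ S, m < k) :
    P (insert m S) = ∑ j ∈ S, A m j * ((-1) ^ position S j * P (S.erase j))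

lemma IsPfaffianFamily.unique (hP : IsPfaffianFamily A P) (hQ : IsPfaffianFamily A Q) : P = Q := by
  funext S
  induction S using Finset.strongInduction with
  | H S ih =>
    rcases S.eq_empty_or_nonempty with rfl | hS
    · rw [hP.empty, hQ.empty]
    · set m := S.min' hS
      have hm : m ∈ S := S.min'_mem hS
      have hlt : ∀ k ∈ S.erase m, m < k := fun k hk => S.min'_lt_of_mem_erase_min' hS hk
      rw [← Finset.insert_erase hm, hP.insert_of_lt hlt, hQ.insert_of_lt hlt]
      refine Finset.sum_congr rfl fun j _ => ?_
      rw [ih _ ((Finset.erase_subset j _).trans_ssubset (Finset.erase_ssubset hm))]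

lemma wickFunctional_blade_expansion {V : Type*} [AddCommGroup V] [Module R V]
    {B : LinearMap.BilinForm R V} (hB : B.IsAlt) (e : ι → V) (i : ι) (S : Finset ι) :
    ∑ j ∈ S, B (e i) (e j) * ((-1) ^ position S j * wickFunctional hB (blade R e (S.erase j))) =
      if i ∈ S then 0 else (-1) ^ position S i * wickFunctional hB (blade R e (insert i S)) := by
  have h := wickFunctional_ι_mul hB (e i) (blade R e S)
  rw [ι_mul_blade, contractLeft_blade, map_sum] at h
  simp only [map_smul, smul_eq_mul, apply_ite, map_zero] at h
  rw [h]
  exact Finset.sum_congr rfl fun j _ => by ring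

lemma isPfaffianFamily_wickFunctional_blade {V : Type*} [AddCommGroup V] [Module R V]
    {B : LinearMap.BilinForm R V} (hB : B.IsAlt) (e : ι → V) :
    IsPfaffianFamily (fun i j => B (e i) (e j)) fun S => wickFunctional hB (blade R e S) where
  empty := by rw [blade_empty, wickFunctional_one]
  insert_of_lt {m S} hm := by
    rw [wickFunctional_blade_expansion hB e m S, if_neg fun h => (hm m h).false,
      position_eq_zero fun k hk => (hm k hk).le, pow_zero, one_mul]

theorem IsPfaffianFamily.expansion (hA : IsAlternating A)
    (hP : IsPfaffianFamily A P) (i : ι) (S : Finset ι) :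
    ∑ j ∈ S, A i j * ((-1) ^ position S j * P (S.erase j)) =
      if i ∈ S then 0 else (-1) ^ position S i * P (insert i S) := by
  let e : ι → ι →₀ R := fun i => Finsupp.single i 1
  have hB := hA.isAlt_linearCombination
  have hgram : (fun i j => Finsupp.linearCombination R (fun i => Finsupp.linearCombination R (A i))
      (e i) (e j)) = A := by
    funext i j
    simp [e]
  have hPwick := hP.unique (hgram ▸ isPfaffianFamily_wickFunctional_blade hB e)
  have h := wickFunctional_blade_expansion hB e i S
  rw [hPwick]
  simpa [e] using h

/-- The coefficients of the expansion of the Pfaffian family `P` over `S`, extended by zero to all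
indices: up to a sign, the Pfaffian of `A_S` with `j` deleted. -/
def pfaffianCofactor (P : Finset ι → R) (S : Finset ι) (j : ι) : R :=
  if j ∈ S then (-1) ^ position S j * P (S.erase j) else 0

lemma sum_mul_pfaffianCofactor (f : ι → R) {S D : Finset ι} (hDS : D ⊆ S) :
    ∑ j ∈ S, f j * pfaffianCofactor P D j =
      ∑ j ∈ D, f j * ((-1) ^ position D j * P (D.erase j)) := by
  simp only [pfaffianCofactor, mul_ite, mul_zero, Finset.sum_ite_mem,
    Finset.inter_eq_right.mpr hDS]

/-- The Wick relations (quadratic Pfaffian identities), for a family indexed by finite sets. -/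
def WickRelations (P : Finset ι → R) : Prop :=
  ∀ S B : Finset ι, ∑ i ∈ S ∆ B, (-1) ^ position (S ∆ B) i * (P (S ∆ {i}) * P (B ∆ {i})) = 0

lemma WickRelations.symmDiff_right (hP : WickRelations P) (T : Finset ι) :
    WickRelations fun S => P (S ∆ T) := by
  intro S B
  have h := hP (S ∆ T) (B ∆ T)
  rw [symmDiff_symmDiff_symmDiff_comm, symmDiff_self, symmDiff_bot] at h
  simpa only [symmDiff_right_comm _ _ T] using h

namespace IsPfaffianFamily

lemma sum_mul_pfaffianCofactor_eq (hA : IsAlternating A)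
    (hP : IsPfaffianFamily A P) (i : ι) {S D : Finset ι} (hDS : D ⊆ S) :
    ∑ j ∈ S, A i j * pfaffianCofactor P D j =
      if i ∈ D then 0 else (-1) ^ position D i * P (insert i D) := by
  rw [sum_mul_pfaffianCofactor _ hDS, hP.expansion hA]

/-- Each term pairs a cofactor of `B` with the expansion of `P (insert i S)`; the expansions with
`i ∈ S` vanish, so they may be added for free. -/
lemma sum_sdiff_eq_sum_cofactor_mul (hA : IsAlternating A)
    (hP : IsPfaffianFamily A P) (S B : Finset ι) :
    ∑ i ∈ B \ S, (-1) ^ position (S ∆ B) i * (P (S ∆ {i}) * P (B ∆ {i})) =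
      ∑ i ∈ B, ∑ j ∈ S, A i j * (pfaffianCofactor P B i * pfaffianCofactor P S j) := by
  rw [Finset.sdiff_eq_filter, Finset.sum_filter]
  refine Finset.sum_congr rfl fun i hiB => ?_
  have hcofactor : ∑ j ∈ S, A i j * (pfaffianCofactor P B i * pfaffianCofactor P S j) =
      pfaffianCofactor P B i * if i ∈ S then 0 else (-1) ^ position S i * P (insert i S) := by
    rw [← hP.sum_mul_pfaffianCofactor_eq hA i subset_rfl, Finset.mul_sum]
    exact Finset.sum_congr rfl fun j _ => by ring
  rw [hcofactor]
  by_cases hiS : i ∈ S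
  · simp [hiS]
  · rw [if_pos hiS, if_neg hiS, pfaffianCofactor, if_pos hiB, neg_one_pow_position_symmDiff,
      symmDiff_singleton_of_notMem hiS, symmDiff_singleton_of_mem hiB]
    ring

theorem wickRelations (hA : IsAlternating A) (hP : IsPfaffianFamily A P) : WickRelations P := by
  intro S B
  have hBS := hP.sum_sdiff_eq_sum_cofactor_mul hA S B
  have hSB := hP.sum_sdiff_eq_sum_cofactor_mul hA B S
  simp only [symmDiff_comm B S, mul_comm (P (B ∆ _))] at hSB
  have hsplit : S ∆ B = S \ B ∪ B \ S := rfl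
  rw [Finset.sum_congr hsplit fun _ _ => rfl, Finset.sum_union disjoint_sdiff_sdiff, hBS, hSB,
    Finset.sum_comm, ← Finset.sum_add_distrib]
  refine Finset.sum_eq_zero fun i _ => ?_
  rw [← Finset.sum_add_distrib]
  refine Finset.sum_eq_zero fun j _ => ?_
  rw [hA.skew i j]
  ring

theorem exists_mul_eq_smul_one (hA : IsAlternating A)
    (hP : IsPfaffianFamily A P) (S : Finset ι) :
    ∃ C : Matrix S S R, A.submatrix (↑) (↑) * C = P S • 1 := by
  refine ⟨Matrix.of fun j l =>
    (-1) ^ position (S.erase l) l * pfaffianCofactor P (S.erase l) j, ?_⟩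
  ext i l
  have hexp := hP.sum_mul_pfaffianCofactor_eq hA i (S.erase_subset (l : ι))
  rw [← Finset.sum_coe_sort] at hexp
  simp only [Matrix.mul_apply, Matrix.submatrix_apply, Matrix.of_apply, Matrix.smul_apply,
    Matrix.one_apply, mul_left_comm (A _ _), ← Finset.mul_sum, hexp]
  by_cases hil : i = l
  · subst hil
    simp [← mul_assoc, ← mul_pow]
  · simp [hil, Subtype.coe_injective.ne hil]

lemma det_eq_zero_of_insert_eq_zero [IsDomain R] (hA : IsAlternating A) (hP : IsPfaffianFamily A P)
    {S D : Finset ι} (hDS : D ⊆ S) (hD : ∀ i ∈ S, P (insert i D) = 0) {l : ι} (hl : l ∈ D)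
    (hPl : P (D.erase l) ≠ 0) : (A.submatrix ((↑) : S → ι) (↑)).det = 0 := by
  refine Matrix.exists_mulVec_eq_zero_iff.mp ⟨fun j => pfaffianCofactor P D j, fun h => ?_, ?_⟩
  · have hcofactor : pfaffianCofactor P D l = 0 := congrFun h ⟨l, hDS hl⟩
    simp [pfaffianCofactor, hl, hPl] at hcofactor
  · ext i
    have hexp := hP.sum_mul_pfaffianCofactor_eq hA i hDS
    rw [hD i i.2, mul_zero, ite_self, ← Finset.sum_coe_sort] at hexp
    exact hexp

theorem ne_zero_iff_det_ne_zero [IsDomain R] (hA : IsAlternating A) (hP : IsPfaffianFamily A P)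
    (S : Finset ι) : P S ≠ 0 ↔ (A.submatrix ((↑) : S → ι) (↑)).det ≠ 0 := by
  refine ⟨fun hPS hdet => ?_, fun hdet => ?_⟩
  · obtain ⟨C, hC⟩ := hP.exists_mul_eq_smul_one hA S
    have h := congrArg Matrix.det hC
    rw [Matrix.det_mul, hdet, zero_mul, Matrix.det_smul, Matrix.det_one, mul_one] at h
    exact pow_ne_zero _ hPS h.symm
  · classical
    obtain ⟨B, -, hB⟩ := (S.powerset.filter (P · ≠ 0)).exists_le_maximal (a := ∅)
      (by simp [hP.empty])
    obtain ⟨hBS, hPB⟩ : B ⊆ S ∧ P B ≠ 0 := by simpa using hB.prop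
    by_contra hPS
    obtain ⟨l, hlS, hlB⟩ := Finset.exists_of_ssubset (hBS.ssubset_of_ne fun h => hPB (h ▸ hPS))
    refine hdet (hP.det_eq_zero_of_insert_eq_zero hA (Finset.insert_subset hlS hBS) ?_
      (Finset.mem_insert_self l B) (by rwa [Finset.erase_insert hlB]))
    intro i hi
    by_contra hPi
    have hBi : B ⊆ insert i (insert l B) :=
      (Finset.subset_insert l B).trans (Finset.subset_insert i _)
    have hle := hB.le_of_ge (by simp [Finset.insert_subset_iff, hi, hlS, hBS, hPi]) hBi
    exact hlB (hle (Finset.mem_insert_of_mem (Finset.mem_insert_self l B)))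

end IsPfaffianFamily

end PfaffianFamily

section PairingPermutation

variable {N : ℕ}

/-- The permutation `0 ↦ j`, `k + 1 ↦ j.succAbove (τ k)`: prepend the value `j` to the word of `τ`,
shifting the values of `τ` to make room for it. -/
def permCons (j : Fin (N + 1)) (τ : Equiv.Perm (Fin N)) : Equiv.Perm (Fin (N + 1)) :=
  j.cycleRange.symm * Equiv.Perm.decomposeFin.symm (0, τ)

@[simp]
lemma permCons_zero (j : Fin (N + 1)) (τ : Equiv.Perm (Fin N)) : permCons j τ 0 = j := by
  simp [permCons]

@[simp]
lemma permCons_succ (j : Fin (N + 1)) (τ : Equiv.Perm (Fin N)) (k : Fin N) :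
    permCons j τ k.succ = j.succAbove (τ k) := by
  simp [permCons]

lemma sign_permCons (j : Fin (N + 1)) (τ : Equiv.Perm (Fin N)) :
    (permCons j τ).sign = (-1) ^ (j : ℕ) * τ.sign := by
  simp [permCons, Equiv.Perm.sign_mul, Equiv.Perm.sign_symm, Equiv.Perm.decomposeFin.symm_sign]

lemma permCons_bijective :
    Function.Bijective fun x : Fin (N + 1) × Equiv.Perm (Fin N) => permCons x.1 x.2 := by
  refine (Fintype.bijective_iff_injective_and_card _).mpr ⟨?_, ?_⟩
  · rintro ⟨j, τ⟩ ⟨j', τ'⟩ h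
    have happly (k) : permCons j τ k = permCons j' τ' k := DFunLike.congr_fun h k
    obtain rfl : j = j' := by simpa using happly 0
    refine Prod.ext rfl (Equiv.ext fun k => ?_)
    simpa using happly k.succ
  · simp [Fintype.card_perm, Nat.factorial_succ]

/-- The condition on the permutations summed over in `pfaffian`: each perfect matching of
`{0, …, N - 1}` is listed exactly once, as `{σ 0, σ 1}, {σ 2, σ 3}, …`. -/
def IsPairingPerm (σ : Equiv.Perm (Fin N)) : Prop :=
  ∀ p q : Fin N, 2 ∣ (p : ℕ) → p ≤ q → σ p ≤ σ q

lemma IsPairingPerm.apply_zero {σ : Equiv.Perm (Fin (N + 1))} (hσ : IsPairingPerm σ) :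
    σ 0 = 0 := by
  simpa using hσ 0 (σ.symm 0) (dvd_zero 2) (Fin.zero_le _)

lemma isPairingPerm_permCons_permCons {j : Fin (N + 1)} {τ : Equiv.Perm (Fin N)} :
    IsPairingPerm (permCons 0 (permCons j τ)) ↔ IsPairingPerm τ := by
  have hlt (i : Fin N) : ¬i.succ.succ ≤ (1 : Fin (N + 2)) := by simp [Fin.le_def]
  simp [IsPairingPerm, Fin.forall_fin_succ, hlt, (Fin.strictMono_succAbove j).le_iff_le]

lemma IsPairingPerm.exists_eq_permCons {σ : Equiv.Perm (Fin (N + 2))} (hσ : IsPairingPerm σ) :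
    ∃ j τ, IsPairingPerm τ ∧ permCons 0 (permCons j τ) = σ := by
  obtain ⟨⟨i, ρ⟩, rfl⟩ := permCons_bijective.surjective σ
  obtain rfl : i = 0 := by simpa using hσ.apply_zero
  obtain ⟨⟨j, τ⟩, rfl⟩ := permCons_bijective.surjective ρ
  exact ⟨j, τ, isPairingPerm_permCons_permCons.mp hσ, rfl⟩

/-- The monomial of the matrix `A` attached to the matching `{σ 0, σ 1}, {σ 2, σ 3}, …`. -/
def pairingProd {R : Type*} [CommMonoid R] (A : Matrix (Fin N) (Fin N) R)
    (σ : Equiv.Perm (Fin N)) : R :=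
  ∏ k : Fin (N / 2), A (σ ⟨2 * (k : ℕ), by lia⟩) (σ ⟨2 * (k : ℕ) + 1, by lia⟩)

lemma pairingProd_permCons_permCons {R : Type*} [CommMonoid R]
    (A : Matrix (Fin (N + 2)) (Fin (N + 2)) R) (j : Fin (N + 1)) (τ : Equiv.Perm (Fin N)) :
    pairingProd A (permCons 0 (permCons j τ)) = A 0 j.succ *
      pairingProd (A.submatrix (Fin.succ ∘ j.succAbove) (Fin.succ ∘ j.succAbove)) τ := by
  set σ := permCons 0 (permCons j τ) with hσ
  have hone : σ 1 = j.succ := by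
    rw [← Fin.succ_zero_eq_one, hσ, permCons_succ, permCons_zero, Fin.zero_succAbove]
  have hsucc (k : Fin N) : σ k.succ.succ = (j.succAbove (τ k)).succ := by simp [hσ]
  rw [pairingProd, ← Fin.prod_congr' _ (Nat.add_div_right N two_pos).symm, Fin.prod_univ_succ]
  congr 1
  · exact congrArg₂ A (permCons_zero _ _) hone
  · exact Finset.prod_congr rfl fun k _ =>
      congrArg₂ A (hsucc ⟨2 * k, by lia⟩) (hsucc ⟨2 * k + 1, by lia⟩)

end PairingPermutation

section Pfaffian

variable {n N : ℕ}

lemma pfaffian_of_not_two_dvd (A : Matrix (Fin N) (Fin N) ℝ) (hN : ¬2 ∣ N) : pfaffian A = 0 :=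
  dif_neg hN

open scoped Classical in
lemma pfaffian_eq_sum_pairingProd (A : Matrix (Fin N) (Fin N) ℝ) (hN : 2 ∣ N) :
    pfaffian A = ∑ σ with IsPairingPerm σ, ((Equiv.Perm.sign σ : ℤ) : ℝ) * pairingProd A σ := by
  rw [pfaffian, dif_pos hN]
  exact Finset.sum_congr (by ext σ; rw [Finset.mem_filter, Finset.mem_filter]; rfl) fun _ _ => rfl

theorem pfaffian_succ_succ (A : Matrix (Fin (N + 2)) (Fin (N + 2)) ℝ) :
    pfaffian A = ∑ j : Fin (N + 1), A 0 j.succ * ((-1) ^ (j : ℕ) *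
      pfaffian (A.submatrix (Fin.succ ∘ j.succAbove) (Fin.succ ∘ j.succAbove))) := by
  classical
  by_cases hN : 2 ∣ N
  · simp only [pfaffian_eq_sum_pairingProd _ hN, Finset.mul_sum, ← Finset.sum_product',
      pfaffian_eq_sum_pairingProd A (by lia : 2 ∣ N + 2)]
    symm
    refine Finset.sum_nbij (fun x => permCons 0 (permCons x.1 x.2)) ?_ ?_ ?_ ?_
    · simp [isPairingPerm_permCons_permCons]
    · intro x _ y _ hxy
      exact permCons_bijective.injective
        (Prod.ext_iff.mp (permCons_bijective.injective (a₁ := (0, _)) (a₂ := (0, _)) hxy)).2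
    · intro σ hσ
      obtain ⟨j, τ, hτ, rfl⟩ := IsPairingPerm.exists_eq_permCons (by simpa using hσ)
      exact ⟨(j, τ), by simpa using hτ, rfl⟩
    · rintro ⟨j, τ⟩ -
      simp only [pairingProd_permCons_permCons, sign_permCons, Fin.val_zero, pow_zero, one_mul]
      push_cast
      ring
  · rw [pfaffian_of_not_two_dvd _ (by lia)]
    simp [pfaffian_of_not_two_dvd _ hN]

lemma pfaffian_fin_zero (A : Matrix (Fin 0) (Fin 0) ℝ) : pfaffian A = 1 := by
  simp [pfaffian]

lemma pfMinor_image (A : Matrix (Fin n) (Fin n) ℝ) {f : Fin N → Fin n} (hf : StrictMono f) :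
    pfMinor A (Finset.univ.image f) = pfaffian (A.submatrix f f) := by
  have hcard : (Finset.univ.image f).card = N := by
    rw [Finset.card_image_of_injective _ hf.injective, Finset.card_fin]
  generalize hS : Finset.univ.image f = S at hcard ⊢
  subst hcard
  have hemb : f = S.orderEmbOfFin rfl :=
    Finset.orderEmbOfFin_unique rfl (fun k => hS ▸ Finset.mem_image_of_mem f (Finset.mem_univ k)) hf
  rw [hemb]
  rfl

lemma pfMinor_empty (A : Matrix (Fin n) (Fin n) ℝ) : pfMinor A ∅ = 1 :=
  pfaffian_fin_zero _

lemma even_card_of_pfMinor_ne_zero {A : Matrix (Fin n) (Fin n) ℝ} {S : Finset (Fin n)}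
    (h : pfMinor A S ≠ 0) : Even S.card :=
  even_iff_two_dvd.mpr (not_imp_comm.mp (pfaffian_of_not_two_dvd _) h)

lemma image_cons_univ {α : Type*} [DecidableEq α] (a : α) (f : Fin N → α) :
    Finset.univ.image (Fin.cons a f : Fin (N + 1) → α) = insert a (Finset.univ.image f) := by
  ext x
  simp [Fin.exists_fin_succ, eq_comm]

lemma image_comp_succAbove_univ {α : Type*} [DecidableEq α] {f : Fin (N + 1) → α}
    (hf : Function.Injective f) (j : Fin (N + 1)) :
    Finset.univ.image (f ∘ j.succAbove) = (Finset.univ.image f).erase (f j) := by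
  rw [← Finset.image_image, Fin.image_succAbove_univ, Finset.compl_eq_univ_sdiff,
    Finset.sdiff_singleton_eq_erase, Finset.image_erase hf]

theorem isPfaffianFamily_pfMinor (A : Matrix (Fin n) (Fin n) ℝ) :
    IsPfaffianFamily A (pfMinor A) where
  empty := pfMinor_empty A
  insert_of_lt {m S} hm := by
    obtain ⟨N, f, hf, rfl⟩ :
        ∃ (N : ℕ) (f : Fin N → Fin n), StrictMono f ∧ Finset.univ.image f = S :=
      ⟨_, _, (S.orderEmbOfFin rfl).strictMono, S.image_orderEmbOfFin_univ rfl⟩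
    have hcons : StrictMono (Fin.cons m f : Fin (N + 1) → Fin n) :=
      Fin.strictMono_cons.mpr ⟨by simpa using hm, hf⟩
    rw [← image_cons_univ, pfMinor_image A hcons, Finset.sum_image hf.injective.injOn]
    cases N with
    | zero => simp [pfaffian_of_not_two_dvd]
    | succ N =>
      rw [pfaffian_succ_succ]
      refine Finset.sum_congr rfl fun j _ => ?_
      rw [position_image hf, ← image_comp_succAbove_univ hf.injective,
        pfMinor_image A (hf.comp (Fin.strictMono_succAbove j))]
      rfl

lemma detMinor_eq_det_submatrix (A : Matrix (Fin n) (Fin n) ℝ) (S : Finset (Fin n)) :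
    detMinor A S = (A.submatrix ((↑) : S → Fin n) (↑)).det :=
  Matrix.det_submatrix_equiv_self (S.orderIsoOfFin rfl).toEquiv
    (A.submatrix ((↑) : S → Fin n) (↑))

end Pfaffian

section OrientedDeltaMatroid

lemma WickRelations.sum_orderIsoOfFin_eq_zero {n : ℕ} {R : Type*} [CommRing R]
    {P : Finset (Fin n) → R} (hP : WickRelations P) (S B : Finset (Fin n)) :
    ∑ j : Fin (S ∆ B).card, (-1 : R) ^ ((j : ℕ) + 1) *
      P (S ∆ {((S ∆ B).orderIsoOfFin rfl j : Fin n)}) *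
      P (B ∆ {((S ∆ B).orderIsoOfFin rfl j : Fin n)}) = 0 := by
  have h := hP S B
  rw [← Finset.sum_coe_sort, ← ((S ∆ B).orderIsoOfFin rfl).toEquiv.sum_comp] at h
  rw [← neg_eq_zero, ← Finset.sum_neg_distrib, ← h]
  refine Finset.sum_congr rfl fun j _ => ?_
  rw [RelIso.coe_fn_toEquiv, position_orderIsoOfFin]
  ring

lemma mul_sign_eq_zero_of_sum_eq_zero {κ M : Type*} [Fintype κ] [AddCommGroup M] [LinearOrder M]
    [IsOrderedAddMonoid M] {f : κ → M} (hf : ∑ j, f j = 0) {w : SignType}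
    (hw : w = 1 ∨ w = -1) (hnonneg : ∀ j, 0 ≤ w * SignType.sign (f j)) (j : κ) :
    w * SignType.sign (f j) = 0 := by
  suffices f j = 0 by simp [this]
  rcases hw with rfl | rfl
  · simp only [one_mul, sign_nonneg_iff] at hnonneg
    exact (Finset.sum_eq_zero_iff_of_nonneg fun j _ => hnonneg j).mp hf j (Finset.mem_univ j)
  · simp only [neg_one_mul, ← Left.sign_neg, sign_nonneg_iff, neg_nonneg] at hnonneg
    exact (Finset.sum_eq_zero_iff_of_nonpos fun j _ => hnonneg j).mp hf j (Finset.mem_univ j)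

theorem WickRelations.isOrientedEvenDeltaMatroid_sign {n : ℕ} {R : Type*} [CommRing R]
    [LinearOrder R] [IsStrictOrderedRing R] {P : Finset (Fin n) → R} (hP : WickRelations P)
    (hne : ∃ S, P S ≠ 0)
    (hparity : ∀ S B, P S ≠ 0 → P B ≠ 0 → S.card % 2 = B.card % 2) :
    IsOrientedEvenDeltaMatroid fun S => SignType.sign (P S) := by
  refine ⟨by simpa using hne, by simpa using hparity, fun S B w hw hnonneg => ?_⟩
  have hsign (j : ℕ) (a b : R) : w * (-1) ^ (j + 1) * SignType.sign a * SignType.sign b =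
      w * SignType.sign ((-1) ^ (j + 1) * a * b) := by
    simp only [sign_mul, sign_pow, Left.sign_neg, sign_one, mul_assoc]
  simp only [hsign] at hnonneg ⊢
  exact mul_sign_eq_zero_of_sum_eq_zero (hP.sum_orderIsoOfFin_eq_zero S B) hw hnonneg

end OrientedDeltaMatroid

/-- Let `A` be a skew-symmetric `n × n` real matrix and `T ⊆ I`.  The map
`p(S) = sign Pf(A_{S Δ T})` is an oriented even Δ-matroid, and its collection of
bases `{S : p S ≠ 0}` is the Δ-matroid represented by `A` and `T` in Bouchet's
sense, namely `{S : det(A_{S Δ T}) ≠ 0}`. -/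
theorem skewMatrix_orientedEvenDeltaMatroid {n : ℕ} (A : Matrix (Fin n) (Fin n) ℝ)
    (hA : A.transpose = -A) (T : Finset (Fin n)) :
    IsOrientedEvenDeltaMatroid (fun S => SignType.sign (pfMinor A (symmDiff S T))) ∧
    ∀ S : Finset (Fin n),
      SignType.sign (pfMinor A (symmDiff S T)) ≠ 0 ↔ detMinor A (symmDiff S T) ≠ 0 := by
  have hPf := isPfaffianFamily_pfMinor A
  have hAlt := isAlternating_of_transpose_eq_neg hA
  refine ⟨((hPf.wickRelations hAlt).symmDiff_right T).isOrientedEvenDeltaMatroid_sign ?_ ?_, ?_⟩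
  · exact ⟨T, by simp [hPf.empty]⟩
  · intro S B hS hB
    have hST := even_card_of_pfMinor_ne_zero hS
    have hBT := even_card_of_pfMinor_ne_zero hB
    have hcardS := card_symmDiff_add S T
    have hcardB := card_symmDiff_add B T
    grind
  · intro S
    rw [ne_eq, sign_eq_zero_iff, ← ne_eq, hPf.ne_zero_iff_det_ne_zero hAlt,
      detMinor_eq_det_submatrix]
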